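/- The characteristic solution w of the Burgers equation with initial data w_σ is infinitely differentiable on [0,∞) × ℝ, and for all integers α₀, α₁ ≥ 0 with k := α₀ + α₁ ≥ 2 and every p ∈ [1,∞] there is a constant C > 0 depending only on k, p and on w₋, w₊ (in particular independent of σ and t) such that for all σ > 0 and all t ≥ 0 one has ‖∂ₜ^{α₀}∂ₓ^{α₁} w(t,·)‖_{L^p(ℝ)} ≤ C (σ + t)^{−1} σ^{−k + 1 + 1/p}. -/

import Mathlib

open Set MeasureTheory
open scoped ENNReal

/-- The smoothed Riemann data `w_σ`. -/
noncomputable def smoothedRiemannData (wm wp σ x : ℝ) : ℝ :=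
  (wp + wm) / 2 + (wp - wm) / 2 * Real.tanh (x / σ)

namespace BurgersAux

open MvPolynomial

abbrev Pol := MvPolynomial (Fin 2) ℝ

/-- `1 - T^2` -/
noncomputable def sP : Pol := 1 - X 0 ^ 2

noncomputable def vP (a b : ℝ) : Pol := C a + C b * X 0

noncomputable def DX : Derivation ℝ Pol Pol :=
  mkDerivation ℝ ![sP * X 1, 2 * X 0 * X 1 ^ 2 * (1 - X 1)]

noncomputable def DS (a b : ℝ) : Derivation ℝ Pol Pol :=
  mkDerivation ℝ ![-(vP a b) * sP * X 1,
    -X 1 ^ 2 * (C b * sP + 2 * X 0 * vP a b * (1 - X 1))]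

noncomputable def II : Ideal Pol := Ideal.span {sP * X 1 ^ 3, sP ^ 2 * X 1 ^ 2}

lemma DX_T : DX (X 0) = sP * X 1 := by simp [DX, mkDerivation_X]
lemma DX_R : DX (X 1) = 2 * X 0 * X 1 ^ 2 * (1 - X 1) := by simp [DX, mkDerivation_X]
lemma DS_T (a b : ℝ) : DS a b (X 0) = -(vP a b) * sP * X 1 := by simp [DS, mkDerivation_X]
lemma DS_R (a b : ℝ) : DS a b (X 1) = -X 1 ^ 2 * (C b * sP + 2 * X 0 * vP a b * (1 - X 1)) := by
  simp [DS, mkDerivation_X]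

lemma DX_s : DX sP = - 2 * X 0 * sP * X 1 := by
  simp [sP, Derivation.leibniz_pow, DX_T]; ring
lemma DS_s (a b : ℝ) : DS a b sP = 2 * X 0 * vP a b * sP * X 1 := by
  simp [sP, Derivation.leibniz_pow, DS_T]; ring

lemma mem_II (P Q : Pol) : P * (sP * X 1 ^ 3) + Q * (sP ^ 2 * X 1 ^ 2) ∈ II :=
  Ideal.mem_span_pair.2 ⟨P, Q, rfl⟩

lemma DX_II (p : Pol) (h : p ∈ II) : DX p ∈ II := by
  obtain ⟨P, Q, rfl⟩ := Ideal.mem_span_pair.1 h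
  have : DX (P * (sP * X 1 ^ 3) + Q * (sP ^ 2 * X 1 ^ 2)) =
      (DX P + P * (-2 * X 0 * X 1 + 6 * X 0 * X 1 * (1 - X 1)) ) * (sP * X 1 ^ 3)
      + (DX Q + Q * (-4 * X 0 * X 1 + 4 * X 0 * X 1 * (1 - X 1))) * (sP ^ 2 * X 1 ^ 2) := by
    simp only [map_add, Derivation.leibniz, Derivation.leibniz_pow, DX_s, DX_R, smul_eq_mul]
    simp
    ring
  rw [this]; exact mem_II _ _

lemma DS_II (a b : ℝ) (p : Pol) (h : p ∈ II) : DS a b p ∈ II := by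
  obtain ⟨P, Q, rfl⟩ := Ideal.mem_span_pair.1 h
  have : DS a b (P * (sP * X 1 ^ 3) + Q * (sP ^ 2 * X 1 ^ 2)) =
      (DS a b P + P * (2 * X 0 * vP a b * X 1
        - 3 * X 1 * (C b * sP + 2 * X 0 * vP a b * (1 - X 1)))) * (sP * X 1 ^ 3)
      + (DS a b Q + Q * (4 * X 0 * vP a b * X 1
        - 2 * X 1 * (C b * sP + 2 * X 0 * vP a b * (1 - X 1)))) * (sP ^ 2 * X 1 ^ 2) := by
    simp only [map_add, Derivation.leibniz, Derivation.leibniz_pow, DS_s, DS_R, smul_eq_mul]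
    simp
    ring
  rw [this]; exact mem_II _ _

lemma DX_v (a b : ℝ) : DX (vP a b) = C b * sP * X 1 := by
  have h : ∀ c : ℝ, DX (C c) = 0 := fun c => DX.map_algebraMap c
  simp only [vP, map_add, Derivation.leibniz, DX_T, smul_eq_mul, h]; ring

lemma DS_C (a b c : ℝ) : DS a b (C c) = 0 := (DS a b).map_algebraMap c
lemma DX_C (c : ℝ) : DX (C c) = 0 := DX.map_algebraMap c

lemma DS_v (a b : ℝ) : DS a b (vP a b) = - vP a b * C b * sP * X 1 := by
  simp only [vP, map_add, Derivation.leibniz, DS_T, smul_eq_mul, DS_C]; ring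

lemma DXX (a b : ℝ) : DX (DX (vP a b)) ∈ II := by
  have : DX (DX (vP a b)) = (-2 * C b * X 0) * (sP * X 1 ^ 3) + 0 * (sP ^ 2 * X 1 ^ 2) := by
    simp only [DX_v, Derivation.leibniz, DX_s, DX_R, DX_C, smul_eq_mul]; ring
  rw [this]; exact mem_II _ _

lemma DSX (a b : ℝ) : DS a b (DX (vP a b)) ∈ II := by
  have : DS a b (DX (vP a b)) = (2 * C b * X 0 * vP a b) * (sP * X 1 ^ 3)
      + (- C b * C b) * (sP ^ 2 * X 1 ^ 2) := by
    simp only [DX_v, Derivation.leibniz, DS_s, DS_R, DS_C, smul_eq_mul]; ring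
  rw [this]; exact mem_II _ _

lemma DSS (a b : ℝ) : DS a b (DS a b (vP a b)) ∈ II := by
  have : DS a b (DS a b (vP a b)) = - vP a b * (DS a b (DX (vP a b)))
      + (vP a b * C b * C b) * (sP ^ 2 * X 1 ^ 2) := by
    simp only [DX_v, DS_v, Derivation.leibniz, DS_s, DS_R, DS_C, smul_eq_mul, map_neg]; ring
  rw [this]
  refine II.add_mem (II.mul_mem_left _ (DSX a b)) (II.mul_mem_left _ ?_)
  exact Ideal.subset_span (by simp)

lemma iter_mem (a b : ℝ) (m n : ℕ) (h : 2 ≤ m + n) :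
    (DS a b)^[m] (DX^[n] (vP a b)) ∈ II := by
  have hX : ∀ n, DX^[n + 2] (vP a b) ∈ II := by
    intro n
    induction n with
    | zero => exact DXX a b
    | succ n ih => rw [Function.iterate_succ_apply']; exact DX_II _ ih
  have hS : ∀ m p, p ∈ II → (DS a b)^[m] p ∈ II := by
    intro m p hp
    induction m with
    | zero => exact hp
    | succ n ih => rw [Function.iterate_succ_apply']; exact DS_II _ _ _ ih
  match n, m, h with
  | n + 2, m, _ => exact hS _ _ (hX n)
  | 1, m + 1, _ => rw [Function.iterate_succ_apply]; exact hS _ _ (DSX a b)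
  | 0, m + 2, _ =>
    rw [Function.iterate_succ_apply, Function.iterate_succ_apply]; exact hS _ _ (DSS a b)

lemma cont_eval (P : Pol) : Continuous fun q : ℝ × ℝ => eval ![q.1, q.2] P := by
  have h : Continuous fun q : ℝ × ℝ => ![q.1, q.2] := by
    refine continuous_pi fun i => ?_
    fin_cases i
    · exact continuous_fst
    · exact continuous_snd
  exact (MvPolynomial.continuous_eval P).comp h

lemma bdd_eval (P : Pol) : ∃ K : ℝ, 0 ≤ K ∧ ∀ T R : ℝ, |T| ≤ 1 → 0 ≤ R → R ≤ 1 →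
    |eval ![T, R] P| ≤ K := by
  obtain ⟨K, hK⟩ := (isCompact_Icc.prod isCompact_Icc :
    IsCompact (Icc (-1:ℝ) 1 ×ˢ Icc (0:ℝ) 1)).exists_bound_of_continuousOn
    (cont_eval P).continuousOn
  refine ⟨|K|, abs_nonneg _, fun T R h1 h2 h3 => ?_⟩
  have := hK (T, R) ⟨abs_le.1 h1, h2, h3⟩
  exact this.trans (le_abs_self K)

lemma bound_II (p : Pol) (h : p ∈ II) : ∃ K : ℝ, 0 ≤ K ∧ ∀ T R : ℝ, |T| ≤ 1 → 0 ≤ R → R ≤ 1 →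
    |eval ![T, R] p| ≤ K * ((1 - T ^ 2) * R ^ 3 + (1 - T ^ 2) ^ 2 * R ^ 2) := by
  obtain ⟨P, Q, rfl⟩ := Ideal.mem_span_pair.1 h
  obtain ⟨K1, h1, hK1⟩ := bdd_eval P
  obtain ⟨K2, h2, hK2⟩ := bdd_eval Q
  refine ⟨K1 + K2, by positivity, fun T R hT hR hR1 => ?_⟩
  have hs : 0 ≤ 1 - T ^ 2 := by
    have := sq_le_one_iff_abs_le_one T |>.2 hT
    linarith
  simp only [map_add, map_mul, sP, map_sub, map_pow, map_one, eval_X]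
  simp only [Matrix.cons_val_zero, Matrix.cons_val_one]
  have e1 := hK1 T R hT hR hR1
  have e2 := hK2 T R hT hR hR1
  have g1 : 0 ≤ (1 - T ^ 2) * R ^ 3 := by positivity
  have g2 : 0 ≤ (1 - T ^ 2) ^ 2 * R ^ 2 := by positivity
  refine (abs_add_le _ _).trans ?_
  rw [abs_mul (eval ![T, R] P), abs_mul (eval ![T, R] Q), abs_of_nonneg g1, abs_of_nonneg g2]
  have := mul_le_mul_of_nonneg_right e1 g1
  have := mul_le_mul_of_nonneg_right e2 g2
  nlinarith [mul_nonneg h1 g2, mul_nonneg h2 g1]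

/-- chain rule for polynomial expressions -/
lemma chain (D : Derivation ℝ Pol Pol) (c : ℝ) (T R : ℝ → ℝ) (S : Set ℝ) (t : ℝ)
    (hT : HasDerivWithinAt T (c * eval ![T t, R t] (D (X 0))) S t)
    (hR : HasDerivWithinAt R (c * eval ![T t, R t] (D (X 1))) S t) (p : Pol) :
    HasDerivWithinAt (fun s => eval ![T s, R s] p) (c * eval ![T t, R t] (D p)) S t := by
  induction p using MvPolynomial.induction_on with
  | C r =>
    have : D (C r) = 0 := D.map_algebraMap r
    simp only [eval_C, this, map_zero, mul_zero]
    exact hasDerivWithinAt_const _ _ _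
  | add p q hp hq =>
    simp only [map_add, mul_add]
    exact hp.add hq
  | mul_X p i hp =>
    have hi : HasDerivWithinAt (fun s => ![T s, R s] i) (c * eval ![T t, R t] (D (X i))) S t := by
      fin_cases i
      · exact hT
      · exact hR
    have := hp.mul hi
    simp only [map_mul, eval_X, Derivation.leibniz, smul_eq_mul, map_add]
    refine (this.congr_deriv ?_)
    ring

lemma iter_time (D : Derivation ℝ Pol Pol) (σ c : ℝ) (T R F : ℝ → ℝ)
    (hT : ∀ t, 0 ≤ t → HasDerivWithinAt T (σ⁻¹ * eval ![T t, R t] (D (X 0))) (Ici 0) t)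
    (hR : ∀ t, 0 ≤ t → HasDerivWithinAt R (σ⁻¹ * eval ![T t, R t] (D (X 1))) (Ici 0) t)
    (p : Pol) (hF : ∀ t, 0 ≤ t → F t = c * eval ![T t, R t] p) (n : ℕ) :
    ∀ t, 0 ≤ t → (fun F => derivWithin F (Set.Ici (0 : ℝ)))^[n] F t =
      c * ((σ⁻¹) ^ n * eval ![T t, R t] (D^[n] p)) := by
  induction n with
  | zero => intro t ht; simpa using hF t ht
  | succ n ih =>
    intro t ht
    rw [Function.iterate_succ_apply', Function.iterate_succ_apply']
    have h1 := ((chain D σ⁻¹ T R (Ici 0) t (hT t ht) (hR t ht) (D^[n] p)).const_mul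
      (c * (σ⁻¹) ^ n)).congr (f₁ := (fun F => derivWithin F (Set.Ici (0 : ℝ)))^[n] F)
      (fun s hs => by rw [ih s hs]; ring) (by rw [ih t ht]; ring)
    rw [h1.derivWithin (uniqueDiffOn_Ici 0 t ht)]
    ring

lemma iter_space (D : Derivation ℝ Pol Pol) (σ : ℝ) (T R F : ℝ → ℝ)
    (hT : ∀ t, HasDerivAt T (σ⁻¹ * eval ![T t, R t] (D (X 0))) t)
    (hR : ∀ t, HasDerivAt R (σ⁻¹ * eval ![T t, R t] (D (X 1))) t)
    (p : Pol) (hF : ∀ t, F t = eval ![T t, R t] p) (n : ℕ) :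
    ∀ t, deriv^[n] F t = (σ⁻¹) ^ n * eval ![T t, R t] (D^[n] p) := by
  induction n with
  | zero => intro t; simpa using hF t
  | succ n ih =>
    intro t
    rw [Function.iterate_succ_apply', Function.iterate_succ_apply', funext ih]
    have h1 := ((chain D σ⁻¹ T R univ t (hT t).hasDerivWithinAt (hR t).hasDerivWithinAt
      (D^[n] p)).const_mul ((σ⁻¹) ^ n))
    rw [hasDerivWithinAt_univ] at h1
    rw [h1.deriv]
    ring

lemma lint_deriv (H H' : ℝ → ℝ) (hd : ∀ x, HasDerivAt H (H' x) x) (h0 : ∀ x, 0 ≤ H' x)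
    (hb : ∀ x, |H x| ≤ 2) : ∫⁻ x, ENNReal.ofReal (H' x) ≤ 4 := by
  have hm : Monotone H := monotone_of_hasDerivAt_nonneg hd h0
  have := lintegral_deriv_eq_volume_image_of_monotoneOn MeasurableSet.univ
    (fun x _ => (hd x).hasDerivWithinAt) (hm.monotoneOn univ)
  rw [Measure.restrict_univ] at this
  rw [this]
  calc volume (H '' univ) ≤ volume (Icc (-2:ℝ) 2) := by
        apply measure_mono
        rintro _ ⟨x, -, rfl⟩
        exact abs_le.1 (hb x)
    _ = 4 := by rw [Real.volume_Icc]; norm_num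

lemma Lp_bound (G H H' : ℝ → ℝ) (A L : ℝ) (hA : 0 < A) (hL : 0 < L)
    (hd : ∀ x, HasDerivAt H (H' x) x) (h0 : ∀ x, 0 ≤ H' x) (hb : ∀ x, |H x| ≤ 2)
    (h1 : ∀ x, |G x| ≤ A) (h2 : ∀ x, |G x| ≤ A * L * H' x) (p : ℝ≥0∞) (hp : 1 ≤ p) :
    eLpNorm G p volume ≤ ENNReal.ofReal (4 * A * L ^ ((1 / p).toReal)) := by
  by_cases hpt : p = ∞
  · subst hpt
    rw [eLpNorm_exponent_top]
    refine (eLpNormEssSup_le_of_ae_bound (C := A) (Filter.Eventually.of_forall h1)).trans ?_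
    apply ENNReal.ofReal_le_ofReal
    simp; linarith
  · have hp0 : p ≠ 0 := by rintro rfl; simp at hp
    set r := p.toReal with hr
    have hr1 : 1 ≤ r := by
      have := (ENNReal.toReal_le_toReal ENNReal.one_ne_top hpt).2 hp
      simpa using this
    have hr0 : 0 < r := by linarith
    rw [eLpNorm_eq_lintegral_rpow_enorm_toReal hp0 hpt]
    have e1 : (1 / p).toReal = 1 / r := by simp [hr]
    rw [e1]
    have key : ∫⁻ x, ‖G x‖ₑ ^ r ≤ ENNReal.ofReal (A ^ r * L * 4) := by
      calc ∫⁻ x, ‖G x‖ₑ ^ r ≤ ∫⁻ x, ENNReal.ofReal (A ^ r * L) * ENNReal.ofReal (H' x) := by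
            apply lintegral_mono
            intro x
            show ‖G x‖ₑ ^ r ≤ ENNReal.ofReal (A ^ r * L) * ENNReal.ofReal (H' x)
            rw [← ENNReal.ofReal_mul (by positivity), Real.enorm_eq_ofReal_abs,
              ENNReal.ofReal_rpow_of_nonneg (abs_nonneg _) hr0.le]
            apply ENNReal.ofReal_le_ofReal
            calc |G x| ^ r = |G x| ^ (r - 1 + 1) := by ring_nf
              _ = |G x| ^ (r - 1) * |G x| := by
                  rw [Real.rpow_add_one' (abs_nonneg _) (by linarith)]
              _ ≤ A ^ (r - 1) * (A * L * H' x) := by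
                  gcongr
                  · exact h1 x
                  · exact h2 x
              _ = A ^ (r - 1 + 1) * L * H' x := by
                  rw [Real.rpow_add_one' hA.le (by linarith)]; ring
              _ = _ := by ring_nf
        _ = ENNReal.ofReal (A ^ r * L) * ∫⁻ x, ENNReal.ofReal (H' x) :=
            lintegral_const_mul' _ _ ENNReal.ofReal_ne_top
        _ ≤ ENNReal.ofReal (A ^ r * L) * 4 := by gcongr; exact lint_deriv H H' hd h0 hb
        _ = _ := by
            rw [ENNReal.ofReal_mul (p := A ^ r * L) (by positivity)]; norm_num
    calc _ ≤ (ENNReal.ofReal (A ^ r * L * 4)) ^ (1 / r) := by gcongr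
      _ = ENNReal.ofReal ((A ^ r * L * 4) ^ (1 / r)) :=
          ENNReal.ofReal_rpow_of_nonneg (by positivity) (by positivity)
      _ ≤ _ := by
          apply ENNReal.ofReal_le_ofReal
          rw [Real.mul_rpow (by positivity) (by positivity),
            Real.mul_rpow (by positivity) (by positivity), ← Real.rpow_mul hA.le,
            mul_one_div_cancel hr0.ne', Real.rpow_one]
          have : (4:ℝ) ^ (1 / r) ≤ 4 ^ (1:ℝ) := by
            apply Real.rpow_le_rpow_of_exponent_le (by norm_num)
            rw [div_le_one hr0]; exact hr1
          rw [Real.rpow_one] at this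
          have h3 : 0 ≤ A * L ^ (1 / r) := by positivity
          nlinarith

lemma foot (f : ℝ → ℝ) (hf : Continuous f) (M : ℝ) (hM : ∀ y, |f y| ≤ M) (t : ℝ) (ht : 0 ≤ t)
    (x : ℝ) : ∃ y, y + t * f y = x := by
  have hc : Continuous fun y => y + t * f y := by fun_prop
  refine mem_range_of_exists_le_of_exists_ge hc ⟨x - t * M, ?_⟩ ⟨x + t * M, ?_⟩
  · have := mul_le_mul_of_nonneg_left (abs_le.1 (hM (x - t * M))).2 ht
    linarith
  · have := mul_le_mul_of_nonneg_left (abs_le.1 (hM (x + t * M))).1 ht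
    linarith

lemma smooth_of_char (f f' : ℝ → ℝ) (hf : ContDiff ℝ (⊤ : ℕ∞) f) (hd : ∀ y, HasDerivAt f (f' y) y)
    (h0 : ∀ y, 0 ≤ f' y) (M : ℝ) (hM : ∀ y, |f y| ≤ M) (w : ℝ → ℝ → ℝ)
    (hw : ∀ t, 0 ≤ t → ∀ y, w t (y + t * f y) = f y) :
    ContDiffOn ℝ (⊤ : ℕ∞) (fun q : ℝ × ℝ => w q.1 q.2) (Set.Ici 0 ×ˢ Set.univ) := by
  rintro ⟨t, x⟩ ⟨ht, -⟩
  simp only [mem_Ici] at ht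
  obtain ⟨y, rfl⟩ := foot f hf.continuous M hM t ht x
  set Φ : ℝ × ℝ → ℝ × ℝ := fun q => (q.1, q.2 + q.1 * f q.2) with hΦ
  have hΦs : ContDiff ℝ (⊤ : ℕ∞) Φ := by
    have : ContDiff ℝ (⊤ : ℕ∞) fun q : ℝ × ℝ => f q.2 := hf.comp contDiff_snd
    exact contDiff_fst.prodMk (contDiff_snd.add (contDiff_fst.mul this))
  set d := 1 + t * f' y with hdd
  have hd0 : d ≠ 0 := by have := mul_nonneg ht (h0 y); positivity
  let E1 : ℝ × ℝ →L[ℝ] ℝ × ℝ := (ContinuousLinearMap.fst ℝ ℝ ℝ).prod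
    (f y • ContinuousLinearMap.fst ℝ ℝ ℝ + d • ContinuousLinearMap.snd ℝ ℝ ℝ)
  let E2 : ℝ × ℝ →L[ℝ] ℝ × ℝ := (ContinuousLinearMap.fst ℝ ℝ ℝ).prod
    (d⁻¹ • ContinuousLinearMap.snd ℝ ℝ ℝ - (d⁻¹ * f y) • ContinuousLinearMap.fst ℝ ℝ ℝ)
  let E : (ℝ × ℝ) ≃L[ℝ] (ℝ × ℝ) := ContinuousLinearEquiv.equivOfInverse E1 E2
    (fun q => by ext <;> simp [E1, E2]; field_simp; ring)
    (fun q => by ext <;> simp [E1, E2]; field_simp; ring)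
  have hΦd : HasFDerivAt Φ (E : ℝ × ℝ →L[ℝ] ℝ × ℝ) (t, y) := by
    have h1 : HasFDerivAt (fun q : ℝ × ℝ => q.1) (ContinuousLinearMap.fst ℝ ℝ ℝ) (t, y) :=
      hasFDerivAt_fst
    have h2 : HasFDerivAt (fun q : ℝ × ℝ => q.2) (ContinuousLinearMap.snd ℝ ℝ ℝ) (t, y) :=
      hasFDerivAt_snd
    have h3 : HasFDerivAt (fun q : ℝ × ℝ => f q.2) (f' y • ContinuousLinearMap.snd ℝ ℝ ℝ) (t, y) :=
      HasDerivAt.comp_hasFDerivAt (h₂ := f) (t, y) (hd y) h2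
    refine (h1.prodMk (h2.add (h1.mul h3))).congr_fderiv ?_
    ext <;> simp [E, E1, hdd]
  have hn : ((⊤ : ℕ∞) : WithTop ℕ∞) ≠ 0 := by simp
  have hs := hΦs.contDiffAt (x := (t, y))
  have hinv := hs.to_localInverse hΦd hn
  have hr : ∀ᶠ q in nhds (Φ (t, y)), Φ (hs.localInverse hΦd hn q) = q :=
    (hs.hasStrictFDerivAt' hΦd hn).eventually_right_inverse
  have hg : ContDiffAt ℝ (⊤ : ℕ∞) (fun q => f (hs.localInverse hΦd hn q).2) (Φ (t, y)) :=
    hf.contDiffAt.comp _ (contDiff_snd.contDiffAt.comp _ hinv)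
  have hev : ∀ q : ℝ × ℝ, 0 ≤ q.1 → Φ (hs.localInverse hΦd hn q) = q →
      w q.1 q.2 = f (hs.localInverse hΦd hn q).2 := by
    intro q hq hq2
    set z := hs.localInverse hΦd hn q
    rw [← hq2] at hq ⊢
    exact hw z.1 hq z.2
  refine hg.contDiffWithinAt.congr_of_eventuallyEq ?_ ?_
  · filter_upwards [self_mem_nhdsWithin, nhdsWithin_le_nhds hr] with q hq1 hq2
    exact hev q hq1.1 hq2
  · exact hev (Φ (t, y)) ht hr.self_of_nhds

lemma derivs_of_char (f f' : ℝ → ℝ) (hd : ∀ y, HasDerivAt f (f' y) y)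
    (h0 : ∀ y, 0 ≤ f' y) (w : ℝ → ℝ → ℝ)
    (hw : ∀ t, 0 ≤ t → ∀ y, w t (y + t * f y) = f y)
    (hs : ContDiffOn ℝ (⊤ : ℕ∞) (fun q : ℝ × ℝ => w q.1 q.2) (Set.Ici 0 ×ˢ Set.univ))
    (t : ℝ) (ht : 0 ≤ t) (y : ℝ) :
    HasDerivAt (w t) (f' y / (1 + t * f' y)) (y + t * f y) ∧
    HasDerivWithinAt (fun s => w s (y + t * f y)) (- f y * (f' y / (1 + t * f' y))) (Ici 0) t := by
  have hdiff : DifferentiableWithinAt ℝ (fun q : ℝ × ℝ => w q.1 q.2) (Set.Ici 0 ×ˢ Set.univ)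
      (t, y + t * f y) := (hs.differentiableOn (by simp)) _ ⟨ht, mem_univ _⟩
  obtain ⟨L, hL⟩ := hdiff
  have hd0 : 1 + t * f' y ≠ 0 := by have := mul_nonneg ht (h0 y); positivity
  -- space curve
  have hX : HasDerivAt (w t) (L (0, 1)) (y + t * f y) := by
    have h1 : HasDerivWithinAt (fun x : ℝ => ((t, x) : ℝ × ℝ)) (0, 1) univ (y + t * f y) :=
      (hasDerivWithinAt_const _ _ _).prodMk (hasDerivWithinAt_id _ _)
    have := hL.comp_hasDerivWithinAt (y + t * f y) h1 (fun x _ => mk_mem_prod ht (mem_univ _))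
    rw [hasDerivWithinAt_univ] at this
    exact this
  have hT : HasDerivWithinAt (fun s => w s (y + t * f y)) (L (1, 0)) (Ici 0) t := by
    have h1 : HasDerivWithinAt (fun s : ℝ => ((s, y + t * f y) : ℝ × ℝ)) (1, 0) (Ici 0) t :=
      (hasDerivWithinAt_id _ _).prodMk (hasDerivWithinAt_const _ _ _)
    exact hL.comp_hasDerivWithinAt t h1 (fun x hx => mk_mem_prod hx (mem_univ _))
  have hC : L (1, f y) = 0 := by
    have h1 : HasDerivWithinAt (fun s : ℝ => ((s, y + s * f y) : ℝ × ℝ)) (1, f y) (Ici 0) t := by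
      refine (hasDerivWithinAt_id _ _).prodMk ?_
      have := ((hasDerivWithinAt_id t (Ici 0)).mul_const (f y)).const_add y
      simpa using this
    have h2 := hL.comp_hasDerivWithinAt t h1 (fun x hx => mk_mem_prod hx (mem_univ _))
    have h3 : HasDerivWithinAt (fun _ : ℝ => f y) (L (1, f y)) (Ici 0) t :=
      h2.congr (fun s hs => (hw s hs y).symm) (hw t ht y).symm
    exact (uniqueDiffOn_Ici 0 t ht).eq_deriv _ h3 (hasDerivWithinAt_const _ _ _)
  have hY : L (0, 1) * (1 + t * f' y) = f' y := by
    have h1' : HasDerivAt (fun z => z + t * f z) (1 + t * f' y) y :=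
      (hasDerivAt_id y).add ((hd y).const_mul t)
    have h2 := HasDerivAt.comp y hX h1'
    have h3 : (w t ∘ fun z => z + t * f z) = f := funext fun z => hw t ht z
    rw [h3] at h2
    exact h2.unique (hd y)
  have hX' : L (0, 1) = f' y / (1 + t * f' y) := by rw [eq_div_iff hd0]; exact hY
  have hT' : L (1, 0) = - f y * (f' y / (1 + t * f' y)) := by
    have : ((1, f y) : ℝ × ℝ) = (1, 0) + f y • (0, 1) := by simp
    rw [this, map_add, map_smul, hX', smul_eq_mul] at hC
    linarith
  exact ⟨hX' ▸ hX, hT' ▸ hT⟩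

lemma hasDerivAt_tanh' (x : ℝ) : HasDerivAt Real.tanh (1 - Real.tanh x ^ 2) x := by
  have h := (Real.hasDerivAt_sinh x).div (Real.hasDerivAt_cosh x) (Real.cosh_pos x).ne'
  have e : Real.tanh = fun x => Real.sinh x / Real.cosh x := funext Real.tanh_eq_sinh_div_cosh
  rw [e]
  refine h.congr_deriv ?_
  have := (Real.cosh_pos x).ne'
  field_simp

lemma contDiff_tanh' : ContDiff ℝ (⊤ : ℕ∞) Real.tanh := by
  have e : Real.tanh = fun x => Real.sinh x / Real.cosh x := funext Real.tanh_eq_sinh_div_cosh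
  rw [e]
  exact Real.contDiff_sinh.div Real.contDiff_cosh fun x => (Real.cosh_pos x).ne'

lemma R_bounds (b τ T R : ℝ) (hb : 0 < b) (hτ : 0 ≤ τ) (hT : |T| ≤ 1)
    (hR : R = (1 + τ * b * (1 - T ^ 2))⁻¹) :
    0 ≤ 1 - T ^ 2 ∧ 1 - T ^ 2 ≤ 1 ∧ 0 < R ∧ R ≤ 1 ∧ R * (1 + τ * b * (1 - T ^ 2)) = 1 ∧
    (1 - T ^ 2) * R * (1 + τ) ≤ 1 + b⁻¹ := by
  have hs : 0 ≤ 1 - T ^ 2 := by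
    have := sq_le_one_iff_abs_le_one T |>.2 hT
    linarith
  have hs1 : 1 - T ^ 2 ≤ 1 := by nlinarith [sq_nonneg T]
  have hD : 1 ≤ 1 + τ * b * (1 - T ^ 2) := by
    have : 0 ≤ τ * b * (1 - T ^ 2) := by positivity
    linarith
  have hR0 : 0 < R := by rw [hR]; positivity
  have hRD : R * (1 + τ * b * (1 - T ^ 2)) = 1 := by rw [hR]; exact inv_mul_cancel₀ (by linarith)
  refine ⟨hs, hs1, hR0, by rw [hR]; exact inv_le_one_of_one_le₀ hD, hRD, ?_⟩
  have h1 : (1 - T ^ 2) * (1 + τ) ≤ (1 + b⁻¹) * (1 + τ * b * (1 - T ^ 2)) := by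
    have e : (1 + b⁻¹) * (1 + τ * b * (1 - T ^ 2)) =
      1 + b⁻¹ + τ * b * (1 - T ^ 2) + τ * (1 - T ^ 2) := by field_simp; ring
    have : 0 ≤ τ * b * (1 - T ^ 2) := by positivity
    have : 0 < b⁻¹ := by positivity
    rw [e]; nlinarith
  calc (1 - T ^ 2) * R * (1 + τ) = R * ((1 - T ^ 2) * (1 + τ)) := by ring
    _ ≤ R * ((1 + b⁻¹) * (1 + τ * b * (1 - T ^ 2))) := by gcongr
    _ = (1 + b⁻¹) * (R * (1 + τ * b * (1 - T ^ 2))) := by ring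
    _ = _ := by rw [hRD, mul_one]

/-- sup bound on the majorant -/
lemma maj_sup (b τ T R : ℝ) (hb : 0 < b) (hτ : 0 ≤ τ) (hT : |T| ≤ 1)
    (hR : R = (1 + τ * b * (1 - T ^ 2))⁻¹) :
    (1 - T ^ 2) * R ^ 3 + (1 - T ^ 2) ^ 2 * R ^ 2 ≤ 2 * (1 + b⁻¹) * (1 + τ)⁻¹ := by
  obtain ⟨hs, hs1, hR0, hR1, hRD, h⟩ := R_bounds b τ T R hb hτ hT hR
  have h' : (1 - T ^ 2) * R ≤ (1 + b⁻¹) * (1 + τ)⁻¹ := by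
    rw [← div_eq_mul_inv, le_div_iff₀ (by linarith)]; exact h
  have g0 : 0 ≤ (1 - T ^ 2) * R := by positivity
  have g1 : (1 - T ^ 2) * R ≤ 1 := by nlinarith
  have g2 : R ^ 2 ≤ 1 := by nlinarith
  have e1 : (1 - T ^ 2) * R ^ 3 ≤ (1 - T ^ 2) * R := by nlinarith
  have e2 : (1 - T ^ 2) ^ 2 * R ^ 2 ≤ (1 - T ^ 2) * R := by nlinarith
  linarith

/-- bound of the majorant by an exact derivative -/
lemma maj_der (b τ T R : ℝ) (hb : 0 < b) (hτ : 0 ≤ τ) (hT : |T| ≤ 1)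
    (hR : R = (1 + τ * b * (1 - T ^ 2))⁻¹) :
    (1 - T ^ 2) * R ^ 3 + (1 - T ^ 2) ^ 2 * R ^ 2 ≤ 2 * (1 + b⁻¹) * (1 + τ)⁻¹ *
      ((1 - T ^ 2) * R + ((1 - T ^ 2) * R * R + T * (2 * T * R ^ 2 * (1 - R)))) ∧
    0 ≤ ((1 - T ^ 2) * R + ((1 - T ^ 2) * R * R + T * (2 * T * R ^ 2 * (1 - R)))) := by
  obtain ⟨hs, hs1, hR0, hR1, hRD, h⟩ := R_bounds b τ T R hb hτ hT hR
  have hbi : 0 < b⁻¹ := by positivity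
  have e1R : 1 - R = τ * b * (1 - T ^ 2) * R := by linear_combination (-1 : ℝ) * hRD
  have key : (1 - T ^ 2) * R * R + T * (2 * T * R ^ 2 * (1 - R)) =
      (1 - T ^ 2) * R ^ 3 * (1 + τ * b * (1 + T ^ 2)) := by
    rw [e1R]
    linear_combination (-(1 - T ^ 2) * R ^ 2) * hRD
  rw [key]
  have g3 : 0 ≤ (1 - T ^ 2) * R ^ 3 := by positivity
  have g1 : 0 ≤ (1 - T ^ 2) * R := by positivity
  constructor
  · have a1 : (1 - T ^ 2) * R ^ 3 * (1 + τ) ≤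
        (1 + b⁻¹) * ((1 - T ^ 2) * R ^ 3 * (1 + τ * b * (1 + T ^ 2))) := by
      have : 1 + τ ≤ (1 + b⁻¹) * (1 + τ * b * (1 + T ^ 2)) := by
        have e : (1 + b⁻¹) * (1 + τ * b * (1 + T ^ 2)) =
          1 + b⁻¹ + τ * b * (1 + T ^ 2) + τ + τ * T ^ 2 := by field_simp; ring
        rw [e]
        have : 0 ≤ τ * b * (1 + T ^ 2) := by positivity
        have : 0 ≤ τ * T ^ 2 := by positivity
        linarith
      calc _ ≤ (1 - T ^ 2) * R ^ 3 * ((1 + b⁻¹) * (1 + τ * b * (1 + T ^ 2))) := by gcongr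
        _ = _ := by ring
    have a2 : (1 - T ^ 2) ^ 2 * R ^ 2 * (1 + τ) ≤ (1 + b⁻¹) * ((1 - T ^ 2) * R) := by
      calc _ = ((1 - T ^ 2) * R * (1 + τ)) * ((1 - T ^ 2) * R) := by ring
        _ ≤ _ := by gcongr
    have a3 : 0 ≤ (1 - T ^ 2) * R ^ 3 * (1 + τ * b * (1 + T ^ 2)) := by positivity
    have hτ1 : 0 < 1 + τ := by linarith
    rw [mul_right_comm, ← div_eq_mul_inv, le_div_iff₀ hτ1]
    nlinarith [mul_nonneg hbi.le a3, mul_nonneg hbi.le g1]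
  · positivity

theorem main (wm wp : ℝ) (hw : wm < wp) (k : ℕ) (p : ℝ≥0∞) (hp : 1 ≤ p) (K : ℝ) (hK : 0 < K)
    (α₀ α₁ : ℕ) (hk : α₀ + α₁ = k)
    (hKb : ∀ T R : ℝ, |T| ≤ 1 → 0 ≤ R → R ≤ 1 →
      |eval ![T, R] ((DS ((wp + wm) / 2) ((wp - wm) / 2))^[α₀]
        (DX^[α₁] (vP ((wp + wm) / 2) ((wp - wm) / 2))))| ≤
      K * ((1 - T ^ 2) * R ^ 3 + (1 - T ^ 2) ^ 2 * R ^ 2))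
    (σ : ℝ) (hσ : 0 < σ) (w : ℝ → ℝ → ℝ)
    (hchar : ∀ t : ℝ, 0 ≤ t → ∀ y : ℝ,
        w t (y + t * smoothedRiemannData wm wp σ y) = smoothedRiemannData wm wp σ y) :
    ContDiffOn ℝ (⊤ : ℕ∞) (fun q : ℝ × ℝ => w q.1 q.2) (Set.Ici 0 ×ˢ Set.univ) ∧
      (∀ t : ℝ, 0 ≤ t →
        eLpNorm
            (fun x =>
              (fun F => derivWithin F (Set.Ici (0 : ℝ)))^[α₀]
                (fun s => deriv^[α₁] (fun x' => w s x') x) t)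
            p volume
          ≤ ENNReal.ofReal ((8 * (1 + ((wp - wm) / 2)⁻¹) * K) * (σ + t)⁻¹ *
              σ ^ (-(k : ℝ) + 1 + (1 / p).toReal))) := by
  set a := (wp + wm) / 2 with ha
  set b := (wp - wm) / 2 with hb
  have hb0 : 0 < b := by rw [hb]; linarith
  set f := smoothedRiemannData wm wp σ with hfdef
  have hfe : ∀ y, f y = a + b * Real.tanh (y / σ) := fun y => rfl
  set f' : ℝ → ℝ := fun y => b / σ * (1 - Real.tanh (y / σ) ^ 2) with hf'
  have hfs : ContDiff ℝ (⊤ : ℕ∞) f := by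
    have : ContDiff ℝ (⊤ : ℕ∞) fun y : ℝ => Real.tanh (y / σ) :=
      contDiff_tanh'.comp (contDiff_id.div_const σ)
    exact contDiff_const.add (contDiff_const.mul this)
  have hd : ∀ y, HasDerivAt f (f' y) y := by
    intro y
    have h1 : HasDerivAt (fun y : ℝ => y / σ) (1 / σ) y := (hasDerivAt_id y).div_const σ
    have h2 := HasDerivAt.comp y (hasDerivAt_tanh' (y / σ)) h1
    refine ((h2.const_mul b).const_add a).congr_deriv ?_
    simp only [hf']; ring
  have h0 : ∀ y, 0 ≤ f' y := by
    intro y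
    have := Real.tanh_sq_lt_one (y / σ)
    have : 0 ≤ 1 - Real.tanh (y / σ) ^ 2 := by linarith
    simp only [hf']; positivity
  have hM : ∀ y, |f y| ≤ |a| + b := by
    intro y
    rw [hfe]
    refine (abs_add_le _ _).trans ?_
    rw [abs_mul, abs_of_pos hb0]
    have := (Real.abs_tanh_lt_one (y / σ)).le
    nlinarith
  have hsm := smooth_of_char f f' hfs hd h0 _ hM w hchar
  refine ⟨hsm, ?_⟩
  set T : ℝ → ℝ → ℝ := fun t x => (w t x - a) / b with hTdef
  set R : ℝ → ℝ → ℝ := fun t x => (1 + t / σ * b * (1 - T t x ^ 2))⁻¹ with hRdef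
  have hfoot : ∀ t, 0 ≤ t → ∀ x, ∃ y, y + t * f y = x ∧ T t x = Real.tanh (y / σ) := by
    intro t ht x
    obtain ⟨y, hy⟩ := foot f hfs.continuous _ hM t ht x
    refine ⟨y, hy, ?_⟩
    simp only [hTdef]
    rw [← hy, hchar t ht y, hfe]
    field_simp; ring
  have hT1 : ∀ t, 0 ≤ t → ∀ x, |T t x| ≤ 1 := by
    intro t ht x
    obtain ⟨y, -, h⟩ := hfoot t ht x
    rw [h]; exact (Real.abs_tanh_lt_one _).le
  have hRb := fun t (ht : 0 ≤ t) x => R_bounds b (t / σ) (T t x) (R t x) hb0 (by positivity)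
    (hT1 t ht x) rfl
  have hD0 : ∀ t, 0 ≤ t → ∀ x, 1 + t / σ * b * (1 - T t x ^ 2) ≠ 0 := by
    intro t ht x h
    have := (hRb t ht x).2.2.2.2.1
    rw [h] at this; simp at this
  have hwT : ∀ t x, w t x = a + b * T t x := by
    intro t x; simp only [hTdef]; field_simp; ring
  have hTd : ∀ t, 0 ≤ t → ∀ x,
      HasDerivAt (T t) (σ⁻¹ * ((1 - T t x ^ 2) * R t x)) x ∧
      HasDerivWithinAt (fun s => T s x)
        (σ⁻¹ * (-(a + b * T t x) * (1 - T t x ^ 2) * R t x)) (Ici 0) t := by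
    intro t ht x
    obtain ⟨y, hy, hTy⟩ := hfoot t ht x
    obtain ⟨h1, h2⟩ := derivs_of_char f f' hd h0 w hchar hsm t ht y
    rw [hy] at h1 h2
    have hfy : f y = a + b * T t x := by rw [hfe, hTy]
    have hf'y : f' y = b / σ * (1 - T t x ^ 2) := by rw [hTy]
    have e : f' y / (1 + t * f' y) / b = σ⁻¹ * ((1 - T t x ^ 2) * R t x) := by
      have e1 : 1 + t * f' y = 1 + t / σ * b * (1 - T t x ^ 2) := by rw [hf'y]; ring
      rw [e1, hf'y]
      simp only [hRdef]
      rw [div_eq_mul_inv (_ * _) (1 + _)]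
      field_simp
    constructor
    · exact ((h1.sub_const a).div_const b).congr_deriv e
    · refine ((h2.sub_const a).div_const b).congr_deriv ?_
      rw [mul_div_assoc, e, hfy]; ring
  have hRd : ∀ t, 0 ≤ t → ∀ x,
      HasDerivAt (R t) (σ⁻¹ * (2 * T t x * R t x ^ 2 * (1 - R t x))) x ∧
      HasDerivWithinAt (fun s => R s x)
        (σ⁻¹ * (-R t x ^ 2 * (b * (1 - T t x ^ 2) + 2 * T t x * (a + b * T t x) * (1 - R t x))))
        (Ici 0) t := by
    intro t ht x
    obtain ⟨h1, h2⟩ := hTd t ht x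
    have hR := (hRb t ht x).2.2.2.2.1
    have e1R : 1 - R t x = t / σ * b * (1 - T t x ^ 2) * R t x := by
      linear_combination (-1 : ℝ) * hR
    have hRi : R t x = (1 + t / σ * b * (1 - T t x ^ 2))⁻¹ := rfl
    constructor
    · have := ((((h1.pow 2).const_sub 1).const_mul (t / σ * b)).const_add 1).inv (hD0 t ht x)
      refine this.congr_deriv ?_
      rw [e1R, div_eq_mul_inv, ← inv_pow]
      change _ * (R t x) ^ 2 = _
      push_cast
      ring
    · have h3 : HasDerivWithinAt (fun s : ℝ => s / σ * b) (σ⁻¹ * b) (Ici 0) t := by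
        have := ((hasDerivWithinAt_id t (Ici 0)).div_const σ).mul_const b
        simpa using this
      have := ((h3.mul ((h2.pow 2).const_sub 1)).const_add 1).inv (hD0 t ht x)
      refine this.congr_deriv ?_
      rw [e1R, div_eq_mul_inv, ← inv_pow]
      change _ * (R t x) ^ 2 = _
      simp only [Pi.pow_apply]
      push_cast
      ring
  have hspace : ∀ t, 0 ≤ t → ∀ x, deriv^[α₁] (fun x' => w t x') x =
      (σ⁻¹) ^ α₁ * eval ![T t x, R t x] (DX^[α₁] (vP a b)) := by
    intro t ht
    refine iter_space DX σ (T t) (R t) _ ?_ ?_ (vP a b) ?_ α₁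
    · intro x
      refine (hTd t ht x).1.congr_deriv ?_
      simp [DX_T, sP]
    · intro x
      refine (hRd t ht x).1.congr_deriv ?_
      simp [DX_R]
    · intro x
      rw [hwT t x]; simp [vP]
  have hfull : ∀ x t, 0 ≤ t → (fun F => derivWithin F (Set.Ici (0 : ℝ)))^[α₀]
        (fun s => deriv^[α₁] (fun x' => w s x') x) t =
      (σ⁻¹) ^ k * eval ![T t x, R t x] ((DS a b)^[α₀] (DX^[α₁] (vP a b))) := by
    intro x t ht
    rw [iter_time (DS a b) σ ((σ⁻¹) ^ α₁) (fun s => T s x) (fun s => R s x) _ ?_ ?_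
      (DX^[α₁] (vP a b)) (fun s hs => hspace s hs x) α₀ t ht, ← hk, pow_add]
    · ring
    · intro s hs
      refine (hTd s hs x).2.congr_deriv ?_
      simp [DS_T, sP, vP]
    · intro s hs
      refine (hRd s hs x).2.congr_deriv ?_
      simp [DS_R, sP, vP]
  intro t ht
  have hτ : 0 ≤ t / σ := by positivity
  have hbi : 0 < b⁻¹ := by positivity
  have hτ1 : 0 < 1 + t / σ := by linarith
  simp_rw [fun x => hfull x t ht]
  set H' : ℝ → ℝ := fun x => (1 - T t x ^ 2) * R t x + ((1 - T t x ^ 2) * R t x * R t x +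
    T t x * (2 * T t x * R t x ^ 2 * (1 - R t x))) with hH'
  have hsk : 0 < (σ⁻¹) ^ k := by positivity
  have hb1 : ∀ x, |(σ⁻¹) ^ k * eval ![T t x, R t x] ((DS a b)^[α₀] (DX^[α₁] (vP a b)))| ≤
      (σ⁻¹) ^ k * (K * ((1 - T t x ^ 2) * R t x ^ 3 + (1 - T t x ^ 2) ^ 2 * R t x ^ 2)) := by
    intro x
    rw [abs_mul, abs_of_pos hsk]
    obtain ⟨-, -, g1, g2, -⟩ := hRb t ht x
    gcongr
    exact hKb _ _ (hT1 t ht x) g1.le g2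
  have hmd := fun x => maj_der b (t / σ) (T t x) (R t x) hb0 hτ (hT1 t ht x) rfl
  have hms := fun x => maj_sup b (t / σ) (T t x) (R t x) hb0 hτ (hT1 t ht x) rfl
  have fin := Lp_bound
    (fun x => (σ⁻¹) ^ k * eval ![T t x, R t x] ((DS a b)^[α₀] (DX^[α₁] (vP a b))))
    (fun x => T t x + T t x * R t x) (fun x => σ⁻¹ * H' x)
    ((σ⁻¹) ^ k * (K * (2 * (1 + b⁻¹) * (1 + t / σ)⁻¹))) σ (by positivity) hσ ?_ ?_ ?_ ?_ ?_ p hp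
  · refine fin.trans (ENNReal.ofReal_le_ofReal (le_of_eq ?_))
    have e1 : σ ^ (-(k : ℝ) + 1 + (1 / p).toReal) = (σ⁻¹) ^ k * σ * σ ^ (1 / p).toReal := by
      rw [Real.rpow_add hσ, Real.rpow_add hσ, Real.rpow_one, Real.rpow_neg hσ.le,
        Real.rpow_natCast, inv_pow]
    have e2 : (1 + t / σ)⁻¹ = σ * (σ + t)⁻¹ := by
      have : 0 < σ + t := by linarith
      field_simp
    rw [e1, e2]; ring
  · intro x
    refine ((hTd t ht x).1.add ((hTd t ht x).1.mul (hRd t ht x).1)).congr_deriv ?_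
    simp only [hH']; ring
  · intro x
    exact mul_nonneg (by positivity) (hmd x).2
  · intro x
    obtain ⟨-, -, g1, g2, -⟩ := hRb t ht x
    have g3 := hT1 t ht x
    refine (abs_add_le _ _).trans ?_
    rw [abs_mul, abs_of_pos g1]
    nlinarith [abs_nonneg (T t x)]
  · intro x
    refine (hb1 x).trans ?_
    gcongr
    exact hms x
  · intro x
    refine (hb1 x).trans ?_
    have e : (σ⁻¹) ^ k * (K * (2 * (1 + b⁻¹) * (1 + t / σ)⁻¹)) * σ * (σ⁻¹ * H' x) =
      (σ⁻¹) ^ k * (K * (2 * (1 + b⁻¹) * (1 + t / σ)⁻¹ * H' x)) := by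
      field_simp
    rw [e]
    gcongr
    exact (hmd x).1

end BurgersAux

theorem burgers_characteristic_solution_higher_derivative_Lp_bound
    (wm wp : ℝ) (hw : wm < wp) (k : ℕ) (hk : 2 ≤ k) (p : ℝ≥0∞) (hp : 1 ≤ p) :
    ∃ C : ℝ, 0 < C ∧ ∀ α₀ α₁ : ℕ, α₀ + α₁ = k → ∀ σ : ℝ, 0 < σ → ∀ w : ℝ → ℝ → ℝ,
      -- `w` is the characteristic solution of Burgers' equation with data `w_σ`:
      (∀ t : ℝ, 0 ≤ t → ∀ y : ℝ,
        w t (y + t * smoothedRiemannData wm wp σ y) = smoothedRiemannData wm wp σ y) →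
      -- `w` is infinitely differentiable on [0,∞) × ℝ
      ContDiffOn ℝ (⊤ : ℕ∞) (fun q : ℝ × ℝ => w q.1 q.2) (Set.Ici 0 ×ˢ Set.univ) ∧
      -- and its mixed derivatives ∂ₜ^{α₀}∂ₓ^{α₁} w satisfy the L^p bounds
      (∀ t : ℝ, 0 ≤ t →
        eLpNorm
            (fun x =>
              (fun F => derivWithin F (Set.Ici (0 : ℝ)))^[α₀]
                (fun s => deriv^[α₁] (fun x' => w s x') x) t)
            p volume
          ≤ ENNReal.ofReal (C * (σ + t)⁻¹ * σ ^ (-(k : ℝ) + 1 + (1 / p).toReal))) := by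
  have hex : ∀ α₀ : ℕ, ∃ K : ℝ, 0 ≤ K ∧ (α₀ ≤ k → ∀ T R : ℝ, |T| ≤ 1 → 0 ≤ R → R ≤ 1 →
      |MvPolynomial.eval ![T, R] ((BurgersAux.DS ((wp + wm) / 2) ((wp - wm) / 2))^[α₀]
        (BurgersAux.DX^[k - α₀] (BurgersAux.vP ((wp + wm) / 2) ((wp - wm) / 2))))| ≤
      K * ((1 - T ^ 2) * R ^ 3 + (1 - T ^ 2) ^ 2 * R ^ 2)) := by
    intro α₀
    by_cases h : α₀ ≤ k
    · obtain ⟨K, hK, hb⟩ := BurgersAux.bound_II _ (BurgersAux.iter_mem ((wp + wm) / 2)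
        ((wp - wm) / 2) α₀ (k - α₀) (by omega))
      exact ⟨K, hK, fun _ => hb⟩
    · exact ⟨0, le_rfl, fun h' => absurd h' h⟩
  choose K hK0 hK using hex
  have hs0 : 0 ≤ ∑ i ∈ Finset.range (k + 1), K i := Finset.sum_nonneg fun i _ => hK0 i
  set S := 1 + ∑ i ∈ Finset.range (k + 1), K i with hS
  have hS0 : 0 < S := by linarith
  have hb : 0 < (wp - wm) / 2 := by linarith
  refine ⟨8 * (1 + ((wp - wm) / 2)⁻¹) * S, by positivity, ?_⟩
  intro α₀ α₁ hα σ hσ w hchar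
  refine BurgersAux.main wm wp hw k p hp S hS0 α₀ α₁ hα ?_ σ hσ w hchar
  intro T R hT hR hR1
  have h1 := hK α₀ (by omega) T R hT hR hR1
  have e : k - α₀ = α₁ := by omega
  rw [e] at h1
  refine h1.trans ?_
  have hle : K α₀ ≤ S := by
    have := Finset.single_le_sum (f := K) (s := Finset.range (k + 1)) (fun i _ => hK0 i)
      (Finset.mem_range.2 (by omega : α₀ < k + 1))
    linarith
  have hs : 0 ≤ 1 - T ^ 2 := by
    have := sq_le_one_iff_abs_le_one T |>.2 hT
    linarith
  gcongr
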